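/- Let f be a homeomorphism of 𝕋^d homotopic to the identity with lift F, and let K ⊆ 𝕋^d be a nonempty compact f-invariant set (not necessarily minimal). Suppose there exist v ∈ ℤ^d \ {0} with gcd(v₁,…,v_d) = 1 and ρ₀ ∈ ℝ \ ℚ such that ρ_K(F) ⊆ (ρ₀/‖v‖²)·v + {v}^⊥ and f has bounded mean motion parallel to v on K. Then there exists a Borel measurable map h : K → 𝕋¹ satisfying h∘f = r_{ρ₀}∘h on K, where r_{ρ₀} : 𝕋¹ → 𝕋¹, x ↦ x + ρ₀ mod 1 (a 'measurable semi-conjugacy'). -/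

import Mathlib

open Filter Topology

local notation "⟪" x ", " y "⟫" => @inner ℝ _ _ x y

noncomputable section

/-- Euclidean space `ℝ^d`. -/
abbrev Rd (d : ℕ) := EuclideanSpace ℝ (Fin d)

/-- The `d`-torus `𝕋^d = ℝ^d/ℤ^d`, realized as a product of circles. -/
abbrev Torus (d : ℕ) := Fin d → AddCircle (1 : ℝ)

/-- The quotient map `π : ℝ^d → 𝕋^d`. -/
def projT {d : ℕ} (z : Rd d) : Torus d := fun i => (z i : AddCircle (1 : ℝ))

/-- An integer vector viewed as an element of `ℝ^d`. -/
def intVec {d : ℕ} (m : Fin d → ℤ) : Rd d := WithLp.toLp 2 (fun i => (m i : ℝ))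

/-- A real vector viewed as an element of `ℝ^k`. -/
def vecR {k : ℕ} (ρ : Fin k → ℝ) : Rd k := WithLp.toLp 2 (fun i => ρ i)

/-- `F : ℝ^d → ℝ^d` is a lift of `f : 𝕋^d → 𝕋^d`:  `π ∘ F = f ∘ π` and
`F (z + m) = F z + m` for every integer vector `m`.  The existence of such a lift
expresses that `f` is homotopic to the identity. -/
def IsLift {d : ℕ} (f : Torus d ≃ₜ Torus d) (F : Rd d ≃ₜ Rd d) : Prop :=
  (∀ z : Rd d, projT (F z) = f (projT z)) ∧
  ∀ (z : Rd d) (m : Fin d → ℤ), F (z + intVec m) = F z + intVec m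

/-- The `n`-th iterate (`n ∈ ℤ`) of a homeomorphism. -/
def iterZ {X : Type*} [TopologicalSpace X] (F : X ≃ₜ X) (n : ℤ) : X → X := ⇑(F.toEquiv ^ n)

/-- The rotation set of `F` on `K`:  all limits `(F^{nᵢ} xᵢ − xᵢ)/nᵢ → ρ` with
`nᵢ ↗ ∞` and `xᵢ ∈ π⁻¹(K)`. -/
def rotSetOn {d : ℕ} (F : Rd d ≃ₜ Rd d) (K : Set (Torus d)) : Set (Rd d) :=
  {ρ | ∃ (n : ℕ → ℕ) (x : ℕ → Rd d), StrictMono n ∧ (∀ i, projT (x i) ∈ K) ∧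
    Tendsto (fun i => (n i : ℝ)⁻¹ • ((⇑F)^[n i] (x i) - x i)) atTop (𝓝 ρ)}

/-- The affine hyperplane `lam • v + {v}^⊥`. -/
def affHyp {d : ℕ} (v : Rd d) (lam : ℝ) : Set (Rd d) :=
  {w | ∃ u : Rd d, ⟪u, v⟫ = 0 ∧ w = lam • v + u}

/-- Bounded mean motion parallel to `v` on `K`:  `|⟨Fⁿ z − z − n ρ, v⟩| ≤ c` for all
`n ∈ ℤ` and `z ∈ π⁻¹(K)`, where `ρ = lam • v` is a point of the hyperplane
`lam • v + {v}^⊥` containing the rotation set (the value of the inner product does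
not depend on the choice of `ρ` in this hyperplane). -/
def BddMeanMotionParallelOn {d : ℕ} (F : Rd d ≃ₜ Rd d) (v : Rd d) (lam : ℝ)
    (K : Set (Torus d)) : Prop :=
  ∃ c : ℝ, 0 < c ∧ ∀ (n : ℤ) (z : Rd d), projT z ∈ K →
    |⟪iterZ F n z - z - (n : ℝ) • (lam • v), v⟫| ≤ c

/-- The measurable section of `projT` with values in `[0, 1)^d`. -/
def torusSection {d : ℕ} (x : Torus d) : Rd d :=
  WithLp.toLp 2 fun i => (AddCircle.equivIco (1 : ℝ) 0 (x i) : ℝ)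

lemma projT_torusSection {d : ℕ} (x : Torus d) : projT (torusSection x) = x :=
  funext fun i => (AddCircle.equivIco (1 : ℝ) 0).symm_apply_apply (x i)

lemma measurable_torusSection {d : ℕ} : Measurable (torusSection (d := d)) := by
  refine (MeasurableEquiv.toLp 2 (Fin d → ℝ)).measurable.comp (measurable_pi_lambda _ fun i => ?_)
  exact measurable_subtype_coe.comp
    ((AddCircle.measurableEquivIco (1 : ℝ) 0).measurable.comp (measurable_pi_apply i))

lemma exists_eq_add_intVec_of_projT_eq {d : ℕ} {z w : Rd d} (h : projT z = projT w) :
    ∃ m : Fin d → ℤ, z = w + intVec m := by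
  have hm : ∀ i, ∃ n : ℤ, z i = w i + n := fun i => by
    have hzw : ((z i - w i : ℝ) : AddCircle (1 : ℝ)) = 0 := by
      rw [AddCircle.coe_sub, sub_eq_zero]
      exact congrFun h i
    obtain ⟨n, hn⟩ := (AddCircle.coe_eq_zero_iff (1 : ℝ)).1 hzw
    refine ⟨n, ?_⟩
    simp only [zsmul_eq_mul, mul_one] at hn
    linarith
  choose m hm using hm
  exact ⟨m, PiLp.ext hm⟩

lemma inner_intVec {d : ℕ} (m v : Fin d → ℤ) :
    ⟪intVec m, intVec v⟫ = ((∑ i, m i * v i : ℤ) : ℝ) := by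
  simp [intVec, PiLp.inner_apply, mul_comm]

lemma continuous_iterZ {X : Type*} [TopologicalSpace X] (F : X ≃ₜ X) (n : ℤ) :
    Continuous (iterZ F n) := by
  have h : iterZ F n = ⇑(F ^ n) := by
    let φ : (X ≃ₜ X) →* Equiv.Perm X :=
      { toFun := Homeomorph.toEquiv, map_one' := rfl, map_mul' := fun _ _ => rfl }
    exact congrArg DFunLike.coe (map_zpow φ F n).symm
  exact h ▸ (F ^ n).continuous

lemma iterZ_apply_self {X : Type*} [TopologicalSpace X] (F : X ≃ₜ X) (n : ℤ) (x : X) :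
    iterZ F n (F x) = iterZ F (n + 1) x := by
  simp only [iterZ, zpow_add_one]
  rfl

lemma iterZ_add_intVec {d : ℕ} {F : Rd d ≃ₜ Rd d}
    (hF : ∀ (z : Rd d) (m : Fin d → ℤ), F (z + intVec m) = F z + intVec m)
    (n : ℤ) (z : Rd d) (m : Fin d → ℤ) :
    iterZ F n (z + intVec m) = iterZ F n z + intVec m := by
  have hcomm : Commute F.toEquiv (Equiv.addRight (intVec m)) :=
    Equiv.ext fun z => hF z m
  exact DFunLike.congr_fun (hcomm.zpow_left n).eq z

/-- The supremum over the `F`-orbit of the deviation from the rotation by `lam • v`, measured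
in the direction `v`. -/
def orbitSup {d : ℕ} (F : Rd d ≃ₜ Rd d) (v : Rd d) (lam : ℝ) (z : Rd d) : ℝ :=
  ⨆ n : ℤ, ⟪iterZ F n z - (n : ℝ) • (lam • v), v⟫

lemma measurable_orbitSup {d : ℕ} (F : Rd d ≃ₜ Rd d) (v : Rd d) (lam : ℝ) :
    Measurable (orbitSup F v lam) :=
  Measurable.iSup fun n =>
    (((continuous_iterZ F n).sub continuous_const).inner continuous_const).measurable

lemma BddMeanMotionParallelOn.bddAbove {d : ℕ} {F : Rd d ≃ₜ Rd d} {v : Rd d} {lam : ℝ}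
    {K : Set (Torus d)} (h : BddMeanMotionParallelOn F v lam K) {z : Rd d} (hz : projT z ∈ K) :
    BddAbove (Set.range fun n : ℤ => ⟪iterZ F n z - (n : ℝ) • (lam • v), v⟫) := by
  obtain ⟨c, -, hc⟩ := h
  refine ⟨c + ⟪z, v⟫, ?_⟩
  rintro _ ⟨n, rfl⟩
  have := (abs_le.1 (hc n z hz)).2
  simp only [inner_sub_left] at this ⊢
  linarith

lemma orbitSup_apply_self {d : ℕ} {F : Rd d ≃ₜ Rd d} {v : Rd d} {lam : ℝ}
    {K : Set (Torus d)} (h : BddMeanMotionParallelOn F v lam K) {z : Rd d} (hz : projT z ∈ K) :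
    orbitSup F v lam (F z) = orbitSup F v lam z + lam * ‖v‖ ^ 2 := by
  unfold orbitSup
  rw [ciSup_add (h.bddAbove hz), ← (Equiv.addRight (1 : ℤ)).iSup_comp (g := fun n : ℤ =>
    ⟪iterZ F n z - (n : ℝ) • (lam • v), v⟫ + lam * ‖v‖ ^ 2)]
  refine iSup_congr fun n => ?_
  rw [iterZ_apply_self]
  simp only [Equiv.coe_addRight, inner_sub_left, inner_smul_left, real_inner_self_eq_norm_sq,
    conj_trivial]
  push_cast
  ring

lemma orbitSup_add_intVec {d : ℕ} {F : Rd d ≃ₜ Rd d} {v : Rd d} {lam : ℝ}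
    (hF : ∀ (z : Rd d) (m : Fin d → ℤ), F (z + intVec m) = F z + intVec m)
    {K : Set (Torus d)} (h : BddMeanMotionParallelOn F v lam K) {z : Rd d} (hz : projT z ∈ K)
    (m : Fin d → ℤ) :
    orbitSup F v lam (z + intVec m) = orbitSup F v lam z + ⟪intVec m, v⟫ := by
  unfold orbitSup
  rw [ciSup_add (h.bddAbove hz)]
  refine iSup_congr fun n => ?_
  rw [iterZ_add_intVec hF, ← inner_add_left]
  congr 1
  abel

/-- **Remark 2.3.**  Even without minimality, a compact invariant set `K` whose
rotation set lies in the hyperplane `(ρ₀/‖v‖²) v + {v}^⊥` (with `v` an integer vector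
with coprime coordinates and `ρ₀` irrational), together with bounded mean motion
parallel to `v` on `K`, yields a measurable semi-conjugacy from `f|_K` to the
irrational rotation `r_{ρ₀}`. -/
theorem statement19 {d : ℕ} (f : Torus d ≃ₜ Torus d) (F : Rd d ≃ₜ Rd d) (hF : IsLift f F)
    (K : Set (Torus d)) (hKne : K.Nonempty) (hKc : IsCompact K) (hKinv : f '' K = K)
    (v : Fin d → ℤ) (hv : v ≠ 0) (hgcd : Finset.univ.gcd v = 1)
    (ρ₀ : ℝ) (hρ₀ : Irrational ρ₀)
    (hrot : rotSetOn F K ⊆ affHyp (intVec v) (ρ₀ / ‖intVec v‖ ^ 2))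
    (hbmm : BddMeanMotionParallelOn F (intVec v) (ρ₀ / ‖intVec v‖ ^ 2) K) :
    ∃ h : Torus d → AddCircle (1 : ℝ), Measurable h ∧
      ∀ x ∈ K, h (f x) = h x + (ρ₀ : AddCircle (1 : ℝ)) := by
  set lam := ρ₀ / ‖intVec v‖ ^ 2 with hlam
  refine ⟨fun x => (orbitSup F (intVec v) lam (torusSection x) : AddCircle (1 : ℝ)),
    AddCircle.measurable_mk'.comp ((measurable_orbitSup _ _ _).comp measurable_torusSection),
    fun x hx => ?_⟩
  have hv_norm : ‖intVec v‖ ^ 2 ≠ 0 := by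
    refine pow_ne_zero 2 (norm_ne_zero_iff.2 fun h => hv (funext fun i => ?_))
    simpa [intVec] using congrFun (congrArg WithLp.ofLp h) i
  have hxK : projT (torusSection x) ∈ K := by rwa [projT_torusSection]
  have hfx : projT (F (torusSection x)) = f x := by rw [hF.1, projT_torusSection]
  have hfxK : projT (F (torusSection x)) ∈ K := by
    rw [hfx, ← hKinv]
    exact Set.mem_image_of_mem f hx
  obtain ⟨m, hm⟩ := exists_eq_add_intVec_of_projT_eq ((projT_torusSection (f x)).trans hfx.symm)
  simp only
  rw [hm, orbitSup_add_intVec hF.2 hbmm hfxK, orbitSup_apply_self hbmm hxK, inner_intVec, hlam,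
    div_mul_cancel₀ _ hv_norm, AddCircle.coe_add, AddCircle.coe_add, add_eq_left]
  exact (AddCircle.coe_eq_zero_iff (1 : ℝ)).2 ⟨∑ i, m i * v i, by simp⟩
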